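/- arXiv:2003.13178 — 5 statements merged into one kernel-verified Lean document; each statement's English description precedes it below -/
import Mathlib

section
/- Let α ∈ (0,1) and β, γ ∈ (0,1) with β + γ = 1, and define δ = (2γ + αβ − αγ − √(α(4βγ + αβ² + αγ² − 2αβγ)))/(2γ). Then 0 < δ < 1 − α. -/
/-!
On the curve `(1 - m) (1 - n) = α`, a stationary point of `m ^ β * n ^ γ` with `m, n > 0` satisfies
`γ (1 - n) (1 - α - n) - α β n = 0`. The quadratic on the left is positive at `n = 0` and negative
at `n = 1 - α`, so its smaller root, which is the tangency point `δ`, lies strictly between.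
-/

theorem four_mul_quadratic_eq {R : Type*} [CommRing R] (a b c x : R) :
    4 * a * (a * (x * x) + b * x + c) = (2 * a * x + b) ^ 2 - discrim a b c := by
  rw [discrim]
  ring

section SmallerRoot

variable {a b c s t : ℝ}

theorem abs_lt_sqrt_discrim_of_quadratic_neg (ha : 0 < a)
    (ht : a * (t * t) + b * t + c < 0) : |2 * a * t + b| < √(discrim a b c) := by
  apply Real.lt_sqrt_of_sq_lt
  rw [sq_abs, ← sub_neg, ← four_mul_quadratic_eq]
  exact mul_neg_of_pos_of_neg (by positivity) ht

theorem sqrt_discrim_lt_abs_of_quadratic_pos (ha : 0 < a) (hdiscrim : 0 ≤ discrim a b c)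
    (hs : 0 < a * (s * s) + b * s + c) : √(discrim a b c) < |2 * a * s + b| := by
  rw [← Real.sqrt_sq_eq_abs]
  apply Real.sqrt_lt_sqrt hdiscrim
  rw [← sub_pos, ← four_mul_quadratic_eq]
  positivity

theorem smaller_root_mem_Ioo_of_quadratic_pos_of_neg (ha : 0 < a) (hst : s ≤ t)
    (hs : 0 < a * (s * s) + b * s + c) (ht : a * (t * t) + b * t + c < 0) :
    (-b - √(discrim a b c)) / (2 * a) ∈ Set.Ioo s t := by
  have h_abs_t := abs_lt_sqrt_discrim_of_quadratic_neg ha ht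
  have h_discrim : 0 ≤ discrim a b c :=
    (Real.sqrt_pos.mp ((abs_nonneg _).trans_lt h_abs_t)).le
  obtain ⟨h_left_t, h_right_t⟩ := abs_lt.mp h_abs_t
  have h_le : 2 * a * s + b ≤ 2 * a * t + b := by gcongr
  have h_left_s : 2 * a * s + b < -√(discrim a b c) := by
    rcases lt_abs.mp (sqrt_discrim_lt_abs_of_quadratic_pos ha h_discrim hs) with h_right | h_left
    -- To the right of the larger root, `s` would exceed `t`.
    · exact absurd (h_le.trans_lt h_right_t) h_right.not_gt
    · exact lt_neg_of_lt_neg h_left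
  constructor
  · rw [lt_div_iff₀ (by positivity)]
    linarith
  · rw [div_lt_iff₀ (by positivity)]
    linarith

end SmallerRoot

theorem tangency_quadratic_eq (α β γ n : ℝ) :
    γ * (n * n) + -(2 * γ + α * β - α * γ) * n + γ * (1 - α) =
      γ * (1 - n) * (1 - α - n) - α * β * n := by
  ring

theorem discrim_tangency_quadratic (α β γ : ℝ) :
    discrim γ (-(2 * γ + α * β - α * γ)) (γ * (1 - α)) =
      α * (4 * β * γ + α * β ^ 2 + α * γ ^ 2 - 2 * α * β * γ) := by
  rw [discrim]
  ring

theorem tangency_point_in_interval_general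
    (α β γ : ℝ) (hα : α ∈ Set.Ioo (0 : ℝ) 1) (hβ : 0 < β) (hγ : 0 < γ) :
    0 < (2 * γ + α * β - α * γ -
          Real.sqrt (α * (4 * β * γ + α * β ^ 2 + α * γ ^ 2 - 2 * α * β * γ))) /
        (2 * γ) ∧
    (2 * γ + α * β - α * γ -
          Real.sqrt (α * (4 * β * γ + α * β ^ 2 + α * γ ^ 2 - 2 * α * β * γ))) /
        (2 * γ) < 1 - α := by
  obtain ⟨hα_pos, hα_lt_one⟩ := hα
  have h_one_sub : 0 < 1 - α := sub_pos.mpr hα_lt_one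
  have h_pos_at_zero :
      0 < γ * (0 * 0) + -(2 * γ + α * β - α * γ) * 0 + γ * (1 - α) := by
    rw [tangency_quadratic_eq, mul_zero, sub_zero, sub_zero, sub_zero]
    positivity
  have h_neg_at_one_sub :
      γ * ((1 - α) * (1 - α)) + -(2 * γ + α * β - α * γ) * (1 - α) + γ * (1 - α) < 0 := by
    rw [tangency_quadratic_eq, sub_self, mul_zero, zero_sub, neg_lt_zero]
    positivity
  have h_mem := smaller_root_mem_Ioo_of_quadratic_pos_of_neg hγ h_one_sub.le
    h_pos_at_zero h_neg_at_one_sub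
  rwa [discrim_tangency_quadratic, neg_neg] at h_mem

/-- For `α ∈ (0,1)` and `β, γ ∈ (0,1)` with `β + γ = 1`, the tangency point
`δ = (2γ + αβ − αγ − √(α(4βγ + αβ² + αγ² − 2αβγ))) / (2γ)` satisfies
`0 < δ < 1 − α`. -/
theorem tangency_point_in_interval
    (α β γ : ℝ) (hα : α ∈ Set.Ioo (0 : ℝ) 1)
    (hβ : β ∈ Set.Ioo (0 : ℝ) 1) (hγ : γ ∈ Set.Ioo (0 : ℝ) 1)
    (hβγ : β + γ = 1) :
    0 < (2 * γ + α * β - α * γ -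
          Real.sqrt (α * (4 * β * γ + α * β ^ 2 + α * γ ^ 2 - 2 * α * β * γ))) /
        (2 * γ) ∧
    (2 * γ + α * β - α * γ -
          Real.sqrt (α * (4 * β * γ + α * β ^ 2 + α * γ ^ 2 - 2 * α * β * γ))) /
        (2 * γ) < 1 - α :=
  tangency_point_in_interval_general α β γ hα hβ.1 hγ.1
end

section
/- Let α ∈ (0,1) and β, γ ∈ (0,1) with β + γ = 1, define δ = (2γ + αβ − αγ − √(α(4βγ + αβ² + αγ² − 2αβγ)))/(2γ), and define f(n) = (1 − α/(1−n))^β · n^γ. Then f has derivative 0 at δ, i.e., HasDerivAt f 0 δ. -/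
/-!
Write `f = m ^ β * n ^ γ` with `m = 1 - α / (1 - n)`. Where `m` and `n` do not vanish, the
logarithmic derivative of `f` is `β * m' / m + γ / n`; clearing denominators, it vanishes exactly
when `γ * (1 - n) * (1 - n - α) = α * β * n`. This is a quadratic equation in `n`, and `δ` is one of
its roots. The computation also covers negative `m` and `n`: at a negative base `x`, the power
`x ^ p` is `|x| ^ p * cos (p * π)`, whose derivative is still `p / x` times its value.
-/

theorem hasDerivAt_rpow_mul_rpow {u v : ℝ → ℝ} {u' v' x : ℝ} (p q : ℝ)
    (hu : HasDerivAt u u' x) (hv : HasDerivAt v v' x) (hux : u x ≠ 0) (hvx : v x ≠ 0) :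
    HasDerivAt (fun y => u y ^ p * v y ^ q)
      (u x ^ p * v x ^ q * (p * (u' / u x) + q * (v' / v x))) x := by
  refine ((hu.rpow_const (p := p) (.inl hux)).mul
    (hv.rpow_const (p := q) (.inl hvx))).congr_deriv ?_
  rw [Real.rpow_sub_one hux, Real.rpow_sub_one hvx]
  ring

theorem hasDerivAt_one_sub_div_one_sub {𝕜 : Type*} [NontriviallyNormedField 𝕜] (a : 𝕜) {x : 𝕜}
    (hx : 1 - x ≠ 0) :
    HasDerivAt (fun y => 1 - a / (1 - y)) (-(a / (1 - x) ^ 2)) x := by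
  have hdiv := (hasDerivAt_const x a).div ((hasDerivAt_id x).const_sub 1) hx
  exact (hdiv.const_sub 1).congr_deriv (by simp)

theorem hasDerivAt_zero_of_critical_eq {α β γ n : ℝ}
    (hα₀ : α ≠ 0) (hα₁ : α ≠ 1) (hβ : β ≠ 0) (hγ : γ ≠ 0)
    (h : γ * (1 - n) * (1 - n - α) = α * β * n) :
    HasDerivAt (fun n : ℝ => (1 - α / (1 - n)) ^ β * n ^ γ) 0 n := by
  have hn : n ≠ 0 := by
    rintro rfl
    simp [hγ, sub_eq_zero, hα₁.symm] at h
  have hαβn : α * β * n ≠ 0 := mul_ne_zero (mul_ne_zero hα₀ hβ) hn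
  have hn₁ : 1 - n ≠ 0 := right_ne_zero_of_mul (left_ne_zero_of_mul (h ▸ hαβn))
  have hm : 1 - n - α ≠ 0 := right_ne_zero_of_mul (h ▸ hαβn)
  have hm_div : 1 - α / (1 - n) ≠ 0 := by
    rw [one_sub_div hn₁]
    exact div_ne_zero hm hn₁
  have hlogDeriv : β * (-(α / (1 - n) ^ 2) / (1 - α / (1 - n))) + γ * (1 / n) = 0 := by
    rw [one_sub_div hn₁]
    field_simp
    linear_combination h
  refine (hasDerivAt_rpow_mul_rpow β γ (hasDerivAt_one_sub_div_one_sub α hn₁)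
    (hasDerivAt_id' n) hm_div hn).congr_deriv ?_
  rw [hlogDeriv, mul_zero]

theorem discrim_critical_eq {R : Type*} [CommRing R] (α β γ : R) :
    discrim γ (-(2 * γ + α * β - α * γ)) (γ * (1 - α)) =
      α * (4 * β * γ + α * β ^ 2 + α * γ ^ 2 - 2 * α * β * γ) := by
  unfold discrim
  ring

theorem discrim_critical_eq_nonneg {R : Type*} [CommRing R] [LinearOrder R] [IsStrictOrderedRing R]
    {α β γ : R} (hα : 0 ≤ α) (hβγ : 0 ≤ β * γ) :
    0 ≤ α * (4 * β * γ + α * β ^ 2 + α * γ ^ 2 - 2 * α * β * γ) :=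
  calc
    0 ≤ α * (4 * (β * γ) + α * (β - γ) ^ 2) := by positivity
    _ = α * (4 * β * γ + α * β ^ 2 + α * γ ^ 2 - 2 * α * β * γ) := by ring

theorem critical_eq_of_discrim_eq_mul_self {K : Type*} [Field K] [NeZero (2 : K)]
    {α β γ s : K} (hγ : γ ≠ 0)
    (hs : α * (4 * β * γ + α * β ^ 2 + α * γ ^ 2 - 2 * α * β * γ) = s * s) :
    let n := (2 * γ + α * β - α * γ - s) / (2 * γ)
    γ * (1 - n) * (1 - n - α) = α * β * n := by
  intro n
  have hroot : γ * (n * n) + -(2 * γ + α * β - α * γ) * n + γ * (1 - α) = 0 :=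
    (quadratic_eq_zero_iff hγ ((discrim_critical_eq α β γ).trans hs) n).2 (.inr (by rw [neg_neg]))
  linear_combination hroot

theorem hasDerivAt_tangency_general {α β γ : ℝ}
    (hα₀ : α ≠ 0) (hα₁ : α ≠ 1) (hβ : β ≠ 0) (hγ : γ ≠ 0)
    (hdiscrim : 0 ≤ α * (4 * β * γ + α * β ^ 2 + α * γ ^ 2 - 2 * α * β * γ)) :
    HasDerivAt (fun n : ℝ => (1 - α / (1 - n)) ^ β * n ^ γ) 0
      ((2 * γ + α * β - α * γ -
          Real.sqrt (α * (4 * β * γ + α * β ^ 2 + α * γ ^ 2 - 2 * α * β * γ))) /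
        (2 * γ)) :=
  hasDerivAt_zero_of_critical_eq hα₀ hα₁ hβ hγ
    (critical_eq_of_discrim_eq_mul_self hγ (Real.mul_self_sqrt hdiscrim).symm)

/-- For `α ∈ (0,1)`, `β, γ ∈ (0,1)` with `β + γ = 1`, the function
`f(n) = (1 − α/(1−n))^β * n^γ` (real powers) has derivative `0` at the tangency
point `δ = (2γ + αβ − αγ − √(α(4βγ + αβ² + αγ² − 2αβγ))) / (2γ)`. -/
theorem hasDerivAt_tangency
    (α β γ : ℝ) (hα : α ∈ Set.Ioo (0 : ℝ) 1)
    (hβ : β ∈ Set.Ioo (0 : ℝ) 1) (hγ : γ ∈ Set.Ioo (0 : ℝ) 1)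
    (hβγ : β + γ = 1) :
    HasDerivAt (fun n : ℝ => (1 - α / (1 - n)) ^ β * n ^ γ) 0
      ((2 * γ + α * β - α * γ -
          Real.sqrt (α * (4 * β * γ + α * β ^ 2 + α * γ ^ 2 - 2 * α * β * γ))) /
        (2 * γ)) :=
  hasDerivAt_tangency_general hα.1.ne' hα.2.ne hβ.1.ne' hγ.1.ne'
    (discrim_critical_eq_nonneg hα.1.le (mul_pos hβ.1 hγ.1).le)
end

section
/- Let α ∈ (0,1) and β, γ ∈ (0,1) with β + γ = 1, define δ = (2γ + αβ − αγ − √(α(4βγ + αβ² + αγ² − 2αβγ)))/(2γ), and define f(n) = (1 − α/(1−n))^β · n^γ. Then for every n ∈ [0, 1−α], f(n) ≤ f(δ); that is, f attains its maximum over [0, 1−α] at δ. -/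
/-!
The critical-point equation of `β log (1 - α / (1 - n)) + γ log n` is quadratic in `n`, and `δ` is
its smaller root, the one in `(0, 1 - α)`. Since `x ^ p ≤ a ^ p * exp (p * (x / a - 1))`, it
suffices that the weighted relative changes of the two factors from `δ` to `n` add up to at most
`0`. The first factor is concave, so its relative change is at most the linear one given by its
tangent at `δ`, and the critical-point equation says that this linear term cancels the relative
change of `n`.
-/

theorem inv_sub_sub_div_sq_le_inv {K : Type*} [Field K] [LinearOrder K] [IsStrictOrderedRing K]
    {a b : K} (ha : 0 < a) (hb : b ≠ 0) : b⁻¹ - (a - b) / b ^ 2 ≤ a⁻¹ := by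
  have gap : a⁻¹ - (b⁻¹ - (a - b) / b ^ 2) = (a - b) ^ 2 / (a * b ^ 2) := by
    field_simp
    ring
  rw [← sub_nonneg, gap]
  positivity

theorem rpow_le_rpow_mul_exp {x a p : ℝ} (hx : 0 ≤ x) (ha : 0 < a) (hp : 0 ≤ p) :
    x ^ p ≤ a ^ p * Real.exp (p * (x / a - 1)) := by
  have ratio_le : x / a ≤ Real.exp (x / a - 1) := by
    simpa using Real.add_one_le_exp (x / a - 1)
  calc x ^ p = a ^ p * (x / a) ^ p := by
        rw [← Real.mul_rpow ha.le (by positivity), mul_div_cancel₀ x ha.ne']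
    _ ≤ a ^ p * Real.exp (x / a - 1) ^ p := by gcongr
    _ = a ^ p * Real.exp (p * (x / a - 1)) := by rw [← Real.exp_mul, mul_comm p]

theorem rpow_mul_rpow_le_of_relative_change_nonpos {x y a b p q : ℝ} (hx : 0 ≤ x) (hy : 0 ≤ y)
    (ha : 0 < a) (hb : 0 < b) (hp : 0 ≤ p) (hq : 0 ≤ q)
    (h : p * (x / a - 1) + q * (y / b - 1) ≤ 0) : x ^ p * y ^ q ≤ a ^ p * b ^ q :=
  calc x ^ p * y ^ q
      ≤ (a ^ p * Real.exp (p * (x / a - 1))) * (b ^ q * Real.exp (q * (y / b - 1))) := by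
        gcongr
        · exact rpow_le_rpow_mul_exp hx ha hp
        · exact rpow_le_rpow_mul_exp hy hb hq
    _ = a ^ p * b ^ q * Real.exp (p * (x / a - 1) + q * (y / b - 1)) := by
        rw [mul_mul_mul_comm, Real.exp_add]
    _ ≤ a ^ p * b ^ q := mul_le_of_le_one_right (by positivity) (Real.exp_le_one_iff.mpr h)

theorem one_sub_div_one_sub_relative_change_le {K : Type*} [Field K] [LinearOrder K]
    [IsStrictOrderedRing K] {α δ n : K} (hα : 0 ≤ α) (hδ : δ < 1 - α) (hn : n < 1) :
    (1 - α / (1 - n)) / (1 - α / (1 - δ)) - 1 ≤ -(α * (n - δ) / ((1 - δ) * (1 - δ - α))) := by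
  have one_sub_δ_pos : 0 < 1 - δ := by linarith
  have gap_pos : 0 < 1 - δ - α := by linarith
  have value_at_δ : 1 - α / (1 - δ) = (1 - δ - α) / (1 - δ) := by field_simp
  have tangent_line : 1 - α / (1 - n) ≤ 1 - α / (1 - δ) - α * (n - δ) / (1 - δ) ^ 2 := by
    have := mul_le_mul_of_nonneg_left
      (inv_sub_sub_div_sq_le_inv (sub_pos.mpr hn) one_sub_δ_pos.ne') hα
    linear_combination this
  have value_pos : 0 < 1 - α / (1 - δ) := value_at_δ ▸ div_pos gap_pos one_sub_δ_pos
  calc (1 - α / (1 - n)) / (1 - α / (1 - δ)) - 1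
      ≤ (1 - α / (1 - δ) - α * (n - δ) / (1 - δ) ^ 2) / (1 - α / (1 - δ)) - 1 := by gcongr
    _ = -(α * (n - δ) / ((1 - δ) * (1 - δ - α))) := by
        rw [value_at_δ]
        field_simp
        ring

theorem isMaxOn_rpow_mul_rpow_of_critical {α β γ δ : ℝ} (hα : 0 < α) (hβ : 0 ≤ β) (hγ : 0 ≤ γ)
    (hδ : δ ∈ Set.Ioo 0 (1 - α)) (critical : γ * ((1 - δ) * (1 - δ - α)) = α * β * δ) :
    IsMaxOn (fun n : ℝ ↦ (1 - α / (1 - n)) ^ β * n ^ γ) (Set.Icc 0 (1 - α)) δ := by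
  obtain ⟨δ_pos, δ_lt⟩ := hδ
  rintro n ⟨n_nonneg, n_le⟩
  have one_sub_n_pos : 0 < 1 - n := by linarith
  have one_sub_δ_pos : 0 < 1 - δ := by linarith
  have gap_pos : 0 < 1 - δ - α := by linarith
  have factor_nonneg : 0 ≤ 1 - α / (1 - n) :=
    sub_nonneg.mpr <| (div_le_one one_sub_n_pos).mpr (by linarith)
  have factor_pos : 0 < 1 - α / (1 - δ) :=
    sub_pos.mpr <| (div_lt_one one_sub_δ_pos).mpr (by linarith)
  have slopes_cancel : β * (α / ((1 - δ) * (1 - δ - α))) = γ / δ := by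
    rw [← mul_div_assoc, div_eq_div_iff (by positivity) δ_pos.ne']
    linear_combination -critical
  refine rpow_mul_rpow_le_of_relative_change_nonpos factor_nonneg n_nonneg factor_pos δ_pos hβ hγ ?_
  calc β * ((1 - α / (1 - n)) / (1 - α / (1 - δ)) - 1) + γ * (n / δ - 1)
      ≤ β * -(α * (n - δ) / ((1 - δ) * (1 - δ - α))) + γ * (n / δ - 1) := by
        gcongr
        exact one_sub_div_one_sub_relative_change_le hα.le δ_lt (by linarith)
    _ = -(β * (α / ((1 - δ) * (1 - δ - α)))) * (n - δ) + γ / δ * (n - δ) := by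
        field_simp
    _ = 0 := by rw [slopes_cancel, neg_mul, neg_add_cancel]

/-- The discriminant of the quadratic critical-point equation `γ (1 - n) (1 - n - α) = α β n`,
factored as in the paper. -/
def tangencyDiscrim (α β γ : ℝ) : ℝ :=
  α * (4 * β * γ + α * β ^ 2 + α * γ ^ 2 - 2 * α * β * γ)

/-- The smaller root of `γ (1 - n) (1 - n - α) = α β n`, the critical-point equation of
`n ↦ (1 - α / (1 - n)) ^ β * n ^ γ`; this is `δ = n₃` in the paper. -/
noncomputable def tangencyPoint (α β γ : ℝ) : ℝ :=
  (2 * γ + α * β - α * γ - √(tangencyDiscrim α β γ)) / (2 * γ)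

theorem tangencyDiscrim_eq_add_sq (α β γ : ℝ) :
    tangencyDiscrim α β γ = 4 * α * β * γ + (α * (β - γ)) ^ 2 := by
  rw [tangencyDiscrim]
  ring

theorem tangencyPoint_critical {α β γ : ℝ} (hα : 0 ≤ α) (hβ : 0 ≤ β) (hγ : 0 < γ) :
    γ * ((1 - tangencyPoint α β γ) * (1 - tangencyPoint α β γ - α)) =
      α * β * tangencyPoint α β γ := by
  have discrim_nonneg : 0 ≤ tangencyDiscrim α β γ := by
    rw [tangencyDiscrim_eq_add_sq]
    positivity
  have discrim_eq : discrim γ (-(2 * γ + α * β - α * γ)) (γ * (1 - α)) =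
      √(tangencyDiscrim α β γ) * √(tangencyDiscrim α β γ) := by
    rw [Real.mul_self_sqrt discrim_nonneg, tangencyDiscrim, discrim]
    ring
  have root := (quadratic_eq_zero_iff hγ.ne' discrim_eq (tangencyPoint α β γ)).mpr <|
    .inr <| by rw [neg_neg, tangencyPoint]
  linear_combination root

theorem sqrt_tangencyDiscrim_lt {α β γ : ℝ} (hα : α ∈ Set.Ioo 0 1) (hβ : 0 ≤ β) (hγ : 0 < γ) :
    √(tangencyDiscrim α β γ) < 2 * γ + α * β - α * γ := by
  obtain ⟨α_pos, α_lt_one⟩ := hα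
  have bound_pos : 0 < 2 * γ + α * β - α * γ := by
    linear_combination hγ + mul_nonneg α_pos.le hβ + mul_pos hγ (sub_pos.mpr α_lt_one)
  have gap_pos : 0 < 4 * γ ^ 2 * (1 - α) := mul_pos (by positivity) (sub_pos.mpr α_lt_one)
  rw [Real.sqrt_lt' bound_pos, tangencyDiscrim_eq_add_sq]
  linear_combination gap_pos

theorem lt_sqrt_tangencyDiscrim {α β γ : ℝ} (hα : α ∈ Set.Ioo 0 1) (hβ : 0 < β) (hγ : 0 < γ) :
    α * (β + γ) < √(tangencyDiscrim α β γ) := by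
  obtain ⟨α_pos, α_lt_one⟩ := hα
  have gap_pos : 0 < 4 * α * β * γ * (1 - α) := mul_pos (by positivity) (sub_pos.mpr α_lt_one)
  rw [Real.lt_sqrt (by positivity), tangencyDiscrim_eq_add_sq]
  linear_combination gap_pos

theorem tangencyPoint_mem_Ioo {α β γ : ℝ} (hα : α ∈ Set.Ioo 0 1) (hβ : 0 < β) (hγ : 0 < γ) :
    tangencyPoint α β γ ∈ Set.Ioo 0 (1 - α) := by
  constructor
  · exact div_pos (sub_pos.mpr (sqrt_tangencyDiscrim_lt hα hβ.le hγ)) (by positivity)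
  · rw [tangencyPoint, div_lt_iff₀ (by positivity)]
    linear_combination lt_sqrt_tangencyDiscrim hα hβ hγ

theorem tangency_point_is_max_general {α β γ : ℝ} (hα : α ∈ Set.Ioo 0 1) (hβ : 0 < β)
    (hγ : 0 < γ) :
    IsMaxOn (fun n : ℝ ↦ (1 - α / (1 - n)) ^ β * n ^ γ) (Set.Icc 0 (1 - α))
      (tangencyPoint α β γ) :=
  isMaxOn_rpow_mul_rpow_of_critical hα.1 hβ.le hγ.le (tangencyPoint_mem_Ioo hα hβ hγ)
    (tangencyPoint_critical hα.1.le hβ.le hγ)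

/-- For `α ∈ (0,1)`, `β, γ ∈ (0,1)` with `β + γ = 1`, the function
`f(n) = (1 − α/(1−n))^β * n^γ` (real powers) attains its maximum over `[0, 1−α]`
at the tangency point `δ = (2γ + αβ − αγ − √(α(4βγ + αβ² + αγ² − 2αβγ))) / (2γ)`:
for every `n ∈ [0, 1−α]`, `f n ≤ f δ`. -/
theorem tangency_point_is_max
    (α β γ : ℝ) (hα : α ∈ Set.Ioo (0 : ℝ) 1)
    (hβ : β ∈ Set.Ioo (0 : ℝ) 1) (hγ : γ ∈ Set.Ioo (0 : ℝ) 1)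
    (hβγ : β + γ = 1) :
    ∀ n ∈ Set.Icc (0 : ℝ) (1 - α),
      (1 - α / (1 - n)) ^ β * n ^ γ ≤
        (1 - α / (1 -
            (2 * γ + α * β - α * γ -
              Real.sqrt (α * (4 * β * γ + α * β ^ 2 + α * γ ^ 2 - 2 * α * β * γ))) /
            (2 * γ))) ^ β *
          ((2 * γ + α * β - α * γ -
              Real.sqrt (α * (4 * β * γ + α * β ^ 2 + α * γ ^ 2 - 2 * α * β * γ))) /
            (2 * γ)) ^ γ :=
  fun _ hn ↦ tangency_point_is_max_general hα hβ.1 hγ.1 hn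
end

section
/- Let n ∈ ℕ, d : Fin n → ℝ with d_j ≥ 0 for all j, and Γ ≥ 0 a real number. Define the primal value P = sSup { ∑_j u_j·d_j : u : Fin n → ℝ, 0 ≤ u_j ≤ 1 for all j, ∑_j u_j ≤ Γ } and the dual value D = sInf { ∑_j ζ_j + Γ·η : ζ : Fin n → ℝ, η ∈ ℝ, ζ_j ≥ 0 for all j, η ≥ 0, ζ_j + η ≥ d_j for all j }. Then P = D. -/
/-!
By weak duality it suffices to find feasible points of the two programs with equal objective
values. Choose a threshold `η ≥ 0` such that at most `Γ` of the `d j` exceed `η` and, unless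
`η = 0`, at least `Γ` of them are `≥ η`. Take `ζ j = (d j - η)⁺`, and let `u` be `1` above the
threshold and `0` below it, with the ties `d j = η` weighted so that `u` exhausts the budget `Γ`
when `η ≠ 0`. This pair satisfies complementary slackness.
-/

open Finset

section Definitions

variable {ι K : Type*} [Fintype ι] [Semiring K] [LE K]

/-- Membership of `u` in the budget uncertainty set `𝒰^Γ`: the feasible region of the inner
worst-case maximization problem. -/
structure IsBudgetScenario (Γ : K) (u : ι → K) : Prop where
  nonneg : ∀ j, 0 ≤ u j
  le_one : ∀ j, u j ≤ 1
  sum_le : ∑ j, u j ≤ Γ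

/-- Feasibility of `(ζ, η)` in the dual of the inner maximization problem, where `ζ j` is the
multiplier of the bound `u j ≤ 1` and `η` that of the budget constraint. -/
structure IsBudgetDual (d ζ : ι → K) (η : K) : Prop where
  nonneg : ∀ j, 0 ≤ ζ j
  budget_nonneg : 0 ≤ η
  le_add : ∀ j, d j ≤ ζ j + η

end Definitions

theorem csSup_eq_csInf_of_forall_le_of_mem {α : Type*} [ConditionallyCompleteLattice α]
    {s t : Set α} {c : α} (hst : ∀ a ∈ s, ∀ b ∈ t, a ≤ b) (hs : c ∈ s) (ht : c ∈ t) :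
    sSup s = sInf t :=
  (IsGreatest.csSup_eq ⟨hs, fun a ha => hst a ha c ht⟩).trans
    (IsLeast.csInf_eq ⟨ht, fun b hb => hst c hs b hb⟩).symm

theorem IsBudgetScenario.sum_mul_le {ι K : Type*} [Fintype ι] [CommSemiring K] [PartialOrder K]
    [IsOrderedRing K] {Γ η : K} {d u ζ : ι → K} (hu : IsBudgetScenario Γ u)
    (hζ : IsBudgetDual d ζ η) : ∑ j, u j * d j ≤ ∑ j, ζ j + Γ * η :=
  calc ∑ j, u j * d j
      ≤ ∑ j, (u j * ζ j + u j * η) := sum_le_sum fun j _ => by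
        rw [← mul_add]
        exact mul_le_mul_of_nonneg_left (hζ.le_add j) (hu.nonneg j)
    _ = ∑ j, u j * ζ j + (∑ j, u j) * η := by rw [sum_add_distrib, sum_mul]
    _ ≤ ∑ j, ζ j + Γ * η := add_le_add
        (sum_le_sum fun j _ => mul_le_of_le_one_left (hζ.nonneg j) (hu.le_one j))
        (mul_le_mul_of_nonneg_right hu.sum_le hζ.budget_nonneg)

theorem isBudgetDual_max_sub {ι K : Type*} [CommRing K] [LinearOrder K] [IsOrderedRing K]
    (d : ι → K) {η : K} (hη : 0 ≤ η) : IsBudgetDual d (fun j => max (d j - η) 0) η where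
  nonneg _ := le_max_right _ _
  budget_nonneg := hη
  le_add _ := sub_le_iff_le_add.mp (le_max_left _ _)

theorem exists_budget_threshold {ι K : Type*} [Fintype ι] [Semiring K] [LinearOrder K]
    [IsOrderedRing K] (d : ι → K) {Γ : K} (hΓ : 0 ≤ Γ) :
    ∃ η, 0 ≤ η ∧ (#{j | η < d j} : K) ≤ Γ ∧ (η = 0 ∨ Γ ≤ #{j | η ≤ d j}) := by
  let T : Finset K := insert 0 {t ∈ univ.image d | Γ ≤ #{j | t ≤ d j}}
  obtain ⟨η, hηT, hmax⟩ := T.exists_max_image id ⟨0, mem_insert_self _ _⟩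
  have hη : 0 ≤ η := hmax 0 (mem_insert_self _ _)
  have hbelow : η = 0 ∨ Γ ≤ #{j | η ≤ d j} := by
    rcases mem_insert.mp hηT with h | h
    · exact .inl h
    · exact .inr (mem_filter.mp h).2
  refine ⟨η, hη, ?_, hbelow⟩
  rcases ({j | η < d j} : Finset ι).eq_empty_or_nonempty with hempty | hne
  · simpa only [hempty, card_empty, Nat.cast_zero] using hΓ
  obtain ⟨m, hm, hmin⟩ := exists_min_image _ d hne
  have hηm : η < d m := (mem_filter.mp hm).2
  have hlt : (#{j | d m ≤ d j} : K) < Γ := by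
    by_contra! h
    have hmT : d m ∈ T :=
      mem_insert_of_mem (mem_filter.mpr ⟨mem_image_of_mem d (mem_univ m), h⟩)
    exact (hmax (d m) hmT).not_gt hηm
  have hcard : #{j | η < d j} ≤ #{j | d m ≤ d j} :=
    card_le_card fun j hj => mem_filter.mpr ⟨mem_univ j, hmin j hj⟩
  exact (Nat.mono_cast hcard).trans hlt.le

section OrderedField

variable {ι K : Type*} [Field K] [LinearOrder K] [IsStrictOrderedRing K]

theorem exists_mem_Icc_sum_eq (s : Finset ι) {f g : ι → K} {c : K} (hfg : f ≤ g)
    (hf : ∑ j ∈ s, f j ≤ c) (hg : c ≤ ∑ j ∈ s, g j) :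
    ∃ u ∈ Set.Icc f g, ∑ j ∈ s, u j = c := by
  have hc : c ∈ segment K (∑ j ∈ s, f j) (∑ j ∈ s, g j) := by
    rw [segment_eq_Icc (hf.trans hg)]
    exact ⟨hf, hg⟩
  obtain ⟨a, b, ha, hb, hab, rfl⟩ := hc
  refine ⟨a • f + b • g, segment_subset_Icc hfg ⟨a, b, ha, hb, hab, rfl⟩, ?_⟩
  simp only [Pi.add_apply, Pi.smul_apply, sum_add_distrib, smul_sum]

variable [Fintype ι]

theorem exists_complementary_scenario (d : ι → K) {Γ : K} (hΓ : 0 ≤ Γ) :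
    ∃ (u : ι → K) (η : K), IsBudgetScenario Γ u ∧ 0 ≤ η ∧ (∑ j, u j) * η = Γ * η ∧
      (∀ j, η < d j → u j = 1) ∧ ∀ j, d j < η → u j = 0 := by
  obtain ⟨η, hη, habove, hbelow⟩ := exists_budget_threshold d hΓ
  let f : ι → K := fun j => if η < d j then 1 else 0
  let g : ι → K := fun j => if η ≤ d j then 1 else 0
  have hfg : f ≤ g := fun j => by
    by_cases h : η < d j
    · simp only [f, g, if_pos h, if_pos h.le, le_refl]
    · simp only [f, g, if_neg h]
      split_ifs <;> simp
  have hf : ∑ j, f j ≤ Γ := by simpa only [f, sum_boole] using habove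
  obtain ⟨u, ⟨hfu, hug⟩, hsum, hslack⟩ :
      ∃ u ∈ Set.Icc f g, ∑ j, u j ≤ Γ ∧ (∑ j, u j) * η = Γ * η := by
    rcases hbelow with rfl | hbelow
    · exact ⟨f, ⟨le_rfl, hfg⟩, hf, by rw [mul_zero, mul_zero]⟩
    · have hg : Γ ≤ ∑ j, g j := by simpa only [g, sum_boole] using hbelow
      obtain ⟨u, hu, hsum⟩ := exists_mem_Icc_sum_eq univ hfg hf hg
      exact ⟨u, hu, hsum.le, by rw [hsum]⟩
  have hnonneg (j : ι) : 0 ≤ u j := le_trans (by dsimp only [f]; split_ifs <;> simp) (hfu j)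
  have hle_one (j : ι) : u j ≤ 1 := (hug j).trans (by dsimp only [g]; split_ifs <;> simp)
  refine ⟨u, η, ⟨hnonneg, hle_one, hsum⟩, hη, hslack, fun j hj => ?_, fun j hj => ?_⟩
  · exact (hle_one j).antisymm (by simpa only [f, if_pos hj] using hfu j)
  · exact le_antisymm (by simpa only [g, if_neg hj.not_ge] using hug j) (hnonneg j)

theorem exists_scenario_dual_sum_mul_eq (d : ι → K) {Γ : K} (hΓ : 0 ≤ Γ) :
    ∃ (u ζ : ι → K) (η : K), IsBudgetScenario Γ u ∧ IsBudgetDual d ζ η ∧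
      ∑ j, u j * d j = ∑ j, ζ j + Γ * η := by
  obtain ⟨u, η, hu, hη, hslack, hone, hzero⟩ := exists_complementary_scenario d hΓ
  refine ⟨u, _, η, hu, isBudgetDual_max_sub d hη, ?_⟩
  have hterm (j : ι) : u j * d j = max (d j - η) 0 + u j * η := by
    rcases lt_trichotomy (d j) η with h | h | h
    · rw [hzero j h, max_eq_right (sub_nonpos.mpr h.le)]
      ring
    · rw [h, sub_self, max_self, zero_add]
    · rw [hone j h, max_eq_left (sub_nonneg.mpr h.le)]
      ring
  rw [← hslack, sum_mul, ← sum_add_distrib]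
  exact sum_congr rfl fun j _ => hterm j

end OrderedField

theorem bertsimas_sim_strong_duality_general {ι : Type*} [Fintype ι] (d : ι → ℝ) {Γ : ℝ}
    (hΓ : 0 ≤ Γ) :
    sSup {s : ℝ | ∃ u : ι → ℝ,
        (∀ j, 0 ≤ u j ∧ u j ≤ 1) ∧ (∑ j, u j ≤ Γ) ∧ s = ∑ j, u j * d j} =
    sInf {s : ℝ | ∃ (ζ : ι → ℝ) (η : ℝ),
        (∀ j, 0 ≤ ζ j) ∧ 0 ≤ η ∧ (∀ j, d j ≤ ζ j + η) ∧
        s = ∑ j, ζ j + Γ * η} := by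
  obtain ⟨u, ζ, η, hu, hζ, hobj⟩ := exists_scenario_dual_sum_mul_eq d hΓ
  refine csSup_eq_csInf_of_forall_le_of_mem ?_
    ⟨u, fun j => ⟨hu.nonneg j, hu.le_one j⟩, hu.sum_le, rfl⟩
    ⟨ζ, η, hζ.nonneg, hζ.budget_nonneg, hζ.le_add, hobj⟩
  rintro _ ⟨v, hv, hvΓ, rfl⟩ _ ⟨ξ, θ, hξ, hθ, hξθ, rfl⟩
  have hscenario : IsBudgetScenario Γ v := ⟨fun j => (hv j).1, fun j => (hv j).2, hvΓ⟩
  exact hscenario.sum_mul_le ⟨hξ, hθ, hξθ⟩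

/-- Strong LP duality for the Bertsimas–Sim inner problem: for `d : Fin n → ℝ`
nonnegative and budget `Γ ≥ 0`, the primal value
`sup { ∑ j, u j * d j : 0 ≤ u ≤ 1, ∑ j, u j ≤ Γ }` equals the dual value
`inf { ∑ j, ζ j + Γ * η : ζ ≥ 0, η ≥ 0, ζ j + η ≥ d j for all j }`. -/
theorem bertsimas_sim_strong_duality
    (n : ℕ) (d : Fin n → ℝ) (hd : ∀ j, 0 ≤ d j) (Γ : ℝ) (hΓ : 0 ≤ Γ) :
    sSup {s : ℝ | ∃ u : Fin n → ℝ,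
        (∀ j, 0 ≤ u j ∧ u j ≤ 1) ∧ (∑ j, u j ≤ Γ) ∧ s = ∑ j, u j * d j} =
    sInf {s : ℝ | ∃ (ζ : Fin n → ℝ) (η : ℝ),
        (∀ j, 0 ≤ ζ j) ∧ 0 ≤ η ∧ (∀ j, d j ≤ ζ j + η) ∧
        s = ∑ j, ζ j + Γ * η} := by
  exact bertsimas_sim_strong_duality_general d hΓ
end

section
/- Let n ∈ ℕ, d : Fin n → ℝ with d_j ≥ 0 for all j, and let Γ ∈ ℕ. Then sSup { ∑_j u_j·d_j : u : Fin n → ℝ, 0 ≤ u_j ≤ 1 for all j, ∑_j u_j ≤ Γ } equals the maximum over all subsets U ⊆ Fin n with |U| ≤ Γ of ∑_{j∈U} d_j. -/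
/-!
Greedily selecting up to `Γ` of the largest positive deviations gives a set `U` together with a
threshold `t ≥ 0` separating the selected deviations from the others, where `t = 0` unless the
budget is exhausted. This threshold is an optimal dual multiplier of the budget constraint: for
every `u` in the polytope,
`∑ u j * d j = ∑ u j * (d j - t) + (∑ u j) * t ≤ ∑ j ∈ U, (d j - t) + Γ * t = ∑ j ∈ U, d j`,
because `d j - t` is nonnegative on `U` and nonpositive off `U`, and `(Γ - #U) * t = 0`.
-/

/-- A pair `(U, t)` satisfying the optimality conditions for selecting at most `Γ` of the values
`d j`. In linear programming terms, the indicator of `U` is a primal solution, `t` is the dual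
variable of the budget constraint, and `eq_zero_or_card_eq` is complementary slackness; the dual
variables of the constraints `u j ≤ 1` are left implicit, being the positive parts of `d j - t`. -/
structure IsThresholdSelection {ι M : Type*} [Zero M] [LE M] (d : ι → M) (Γ : ℕ)
    (U : Finset ι) (t : M) : Prop where
  nonneg : 0 ≤ t
  le_of_mem : ∀ j ∈ U, t ≤ d j
  le_of_notMem : ∀ j ∉ U, d j ≤ t
  card_le : U.card ≤ Γ
  eq_zero_or_card_eq : t = 0 ∨ U.card = Γ

section Existence

variable {ι M : Type*} [Finite ι] [Zero M] [LinearOrder M]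

lemma exists_isThresholdSelection_zero (d : ι → M) :
    ∃ t, IsThresholdSelection d 0 ∅ t := by
  obtain ⟨b, hb⟩ := (Set.finite_range d).bddAbove
  exact ⟨max 0 b,
    { nonneg := le_max_left 0 b
      le_of_mem := by simp
      le_of_notMem := fun j _ ↦ (hb ⟨j, rfl⟩).trans (le_max_right 0 b)
      card_le := le_rfl
      eq_zero_or_card_eq := .inr rfl }⟩

lemma IsThresholdSelection.exists_succ {d : ι → M} {Γ : ℕ} {U : Finset ι} {t : M}
    (h : IsThresholdSelection d Γ U t) :
    ∃ U' t', IsThresholdSelection d (Γ + 1) U' t' := by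
  classical
  by_cases hpos : ∃ j ∉ U, 0 < d j
  · obtain ⟨i, hiU, hi⟩ := hpos
    obtain ⟨a, haU, ha⟩ := (Set.toFinite {j | j ∉ U}).exists_maximalFor d _ ⟨i, hiU⟩
    have hmax : ∀ j ∉ U, d j ≤ d a := fun j hj ↦ (le_total (d j) (d a)).elim id (ha hj)
    have ha_pos : 0 < d a := hi.trans_le (hmax i hiU)
    have hcard : U.card = Γ := h.eq_zero_or_card_eq.resolve_left
      (ha_pos.trans_le (h.le_of_notMem a haU)).ne'
    have hcard' : (insert a U).card = Γ + 1 := by rw [Finset.card_insert_of_notMem haU, hcard]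
    exact ⟨insert a U, d a,
      { nonneg := ha_pos.le
        le_of_mem := Finset.forall_mem_insert _ _ _ |>.mpr
          ⟨le_rfl, fun j hj ↦ (h.le_of_notMem a haU).trans (h.le_of_mem j hj)⟩
        le_of_notMem := fun j hj ↦ hmax j (mt Finset.mem_insert_of_mem hj)
        card_le := hcard'.le
        eq_zero_or_card_eq := .inr hcard' }⟩
  · push Not at hpos
    exact ⟨U, 0,
      { nonneg := le_rfl
        le_of_mem := fun j hj ↦ h.nonneg.trans (h.le_of_mem j hj)
        le_of_notMem := hpos
        card_le := h.card_le.trans Γ.le_succ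
        eq_zero_or_card_eq := .inl rfl }⟩

lemma exists_isThresholdSelection (d : ι → M) (Γ : ℕ) :
    ∃ U t, IsThresholdSelection d Γ U t := by
  induction Γ with
  | zero => exact ⟨∅, exists_isThresholdSelection_zero d⟩
  | succ Γ ih =>
    obtain ⟨U, t, h⟩ := ih
    exact h.exists_succ

end Existence

section Optimality

variable {ι R : Type*} [Fintype ι] [Ring R]

lemma sum_mul_le_sum_of_nonneg_of_nonpos [PartialOrder R] [IsOrderedRing R]
    {u c : ι → R} {U : Finset ι} (hu : ∀ j, 0 ≤ u j ∧ u j ≤ 1)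
    (hc_nonneg : ∀ j ∈ U, 0 ≤ c j) (hc_nonpos : ∀ j ∉ U, c j ≤ 0) :
    ∑ j, u j * c j ≤ ∑ j ∈ U, c j := by
  classical
  calc
    ∑ j, u j * c j ≤ ∑ j, if j ∈ U then c j else 0 := by
      refine Finset.sum_le_sum fun j _ ↦ ?_
      split_ifs with hj
      · exact mul_le_of_le_one_left (hc_nonneg j hj) (hu j).2
      · exact mul_nonpos_of_nonneg_of_nonpos (hu j).1 (hc_nonpos j hj)
    _ = ∑ j ∈ U, c j := by rw [Finset.sum_ite_mem, Finset.univ_inter]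

lemma IsThresholdSelection.sum_mul_le [PartialOrder R] [IsOrderedRing R]
    {d u : ι → R} {Γ : ℕ} {U : Finset ι} {t : R} (h : IsThresholdSelection d Γ U t)
    (hu : ∀ j, 0 ≤ u j ∧ u j ≤ 1) (hbudget : ∑ j, u j ≤ (Γ : R)) :
    ∑ j, u j * d j ≤ ∑ j ∈ U, d j := by
  have hreduced : ∑ j, u j * (d j - t) ≤ ∑ j ∈ U, (d j - t) :=
    sum_mul_le_sum_of_nonneg_of_nonpos hu (fun j hj ↦ sub_nonneg.mpr (h.le_of_mem j hj))
      (fun j hj ↦ sub_nonpos.mpr (h.le_of_notMem j hj))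
  have hslack : (Γ : R) * t = U.card * t := by
    rcases h.eq_zero_or_card_eq with rfl | hcard
    · simp only [mul_zero]
    · rw [hcard]
  calc
    ∑ j, u j * d j = ∑ j, u j * (d j - t) + (∑ j, u j) * t := by
      simp only [mul_sub, Finset.sum_sub_distrib, Finset.sum_mul, sub_add_cancel]
    _ ≤ ∑ j ∈ U, (d j - t) + Γ * t :=
      add_le_add hreduced (mul_le_mul_of_nonneg_right hbudget h.nonneg)
    _ = ∑ j ∈ U, d j := by
      rw [hslack, Finset.sum_sub_distrib, Finset.sum_const, nsmul_eq_mul, sub_add_cancel]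

lemma exists_card_le_sum_mul_le_sum [LinearOrder R] [IsOrderedRing R] (d : ι → R) {u : ι → R}
    {Γ : ℕ} (hu : ∀ j, 0 ≤ u j ∧ u j ≤ 1) (hbudget : ∑ j, u j ≤ (Γ : R)) :
    ∃ U : Finset ι, U.card ≤ Γ ∧ ∑ j, u j * d j ≤ ∑ j ∈ U, d j := by
  obtain ⟨U, t, h⟩ := exists_isThresholdSelection d Γ
  exact ⟨U, h.card_le, h.sum_mul_le hu hbudget⟩

lemma exists_sum_mul_eq_sum_of_card_le [PartialOrder R] [IsOrderedRing R] (d : ι → R)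
    {Γ : ℕ} {U : Finset ι} (hU : U.card ≤ Γ) :
    ∃ u : ι → R, (∀ j, 0 ≤ u j ∧ u j ≤ 1) ∧ ∑ j, u j ≤ (Γ : R) ∧
      ∑ j ∈ U, d j = ∑ j, u j * d j := by
  classical
  refine ⟨fun j ↦ if j ∈ U then 1 else 0, fun j ↦ ?_, ?_, ?_⟩
  · dsimp only
    split_ifs <;> simp
  · simpa using Nat.mono_cast hU
  · simp

theorem budget_polytope_sup_eq_subset_max_general [LinearOrder R] [IsOrderedRing R]
    (d : ι → R) (Γ : ℕ) :
    IsGreatest {s : R | ∃ u : ι → R,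
        (∀ j, 0 ≤ u j ∧ u j ≤ 1) ∧ (∑ j, u j ≤ (Γ : R)) ∧ s = ∑ j, u j * d j}
      ((Finset.univ.filter (fun U : Finset ι ↦ U.card ≤ Γ)).sup'
        ⟨∅, by simp⟩ (fun U ↦ ∑ j ∈ U, d j)) := by
  constructor
  · obtain ⟨U, hU, hmax⟩ := Finset.exists_mem_eq_sup'
      (s := Finset.univ.filter (fun U : Finset ι ↦ U.card ≤ Γ)) ⟨∅, by simp⟩
      (fun U ↦ ∑ j ∈ U, d j)
    rw [hmax]
    exact exists_sum_mul_eq_sum_of_card_le d (Finset.mem_filter_univ U |>.mp hU)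
  · rintro _ ⟨u, hu, hbudget, rfl⟩
    obtain ⟨U, hU, hle⟩ := exists_card_le_sum_mul_le_sum d hu hbudget
    exact Finset.le_sup'_of_le _ (Finset.mem_filter_univ U |>.mpr hU) hle

end Optimality

/-- For nonnegative deviations `d : Fin n → ℝ` and an integer budget `Γ`, the
continuous worst case over the budget polytope `{u ∈ [0,1]^n : ∑ j, u j ≤ Γ}`
coincides with the combinatorial worst case over subsets `U` of cardinality at
most `Γ`. -/
theorem budget_polytope_sup_eq_subset_max
    (n : ℕ) (d : Fin n → ℝ) (hd : ∀ j, 0 ≤ d j) (Γ : ℕ) :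
    sSup {s : ℝ | ∃ u : Fin n → ℝ,
        (∀ j, 0 ≤ u j ∧ u j ≤ 1) ∧ (∑ j, u j ≤ (Γ : ℝ)) ∧ s = ∑ j, u j * d j} =
    (Finset.univ.filter (fun U : Finset (Fin n) => U.card ≤ Γ)).sup'
      ⟨∅, by simp⟩ (fun U => ∑ j ∈ U, d j) :=
  (budget_polytope_sup_eq_subset_max_general d Γ).csSup_eq
end
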